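/- arXiv:1301.0130 — 4 statements merged into one kernel-verified Lean document; each statement's English description precedes it below -/
import Mathlib

section
/- Let c be the unique real number satisfying e^{-c} = c. Then for every real number q > 1, one has (cq - 1)·ln(1 - 1/q) - ln(c) = Σ_{n=1}^∞ (1/n - c/(n+1))·(1/q)^n, and in particular (cq - 1)·ln(1 - 1/q) - ln(c) > 0. -/
/-- Let `c` be the unique real number satisfying `e^{-c} = c`. Then for
every real `q > 1`, one has
`(c*q - 1) * log (1 - 1/q) - log c = ∑_{n=1}^∞ (1/n - c/(n+1)) * (1/q)^n`,
and in particular this quantity is positive. -/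
theorem axelrod_log_series_identity (c : ℝ) (hc : Real.exp (-c) = c)
    (q : ℝ) (hq : 1 < q) :
    (c * q - 1) * Real.log (1 - 1 / q) - Real.log c =
      ∑' n : ℕ, (1 / (n + 1 : ℝ) - c / (n + 2)) * (1 / q) ^ (n + 1) ∧
    0 < (c * q - 1) * Real.log (1 - 1 / q) - Real.log c := by
  have hq0 : 0 < q := by linarith
  have hc0 : 0 < c := by rw [← hc]; exact Real.exp_pos _
  have hc1 : c < 1 := by
    have h : Real.exp (-c) < 1 := by
      rw [← Real.exp_zero]; exact Real.exp_lt_exp.mpr (by linarith)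
    linarith
  have hlog : Real.log c = -c := by
    conv_lhs => rw [← hc]
    exact Real.log_exp _
  have hx0 : 0 < 1 / q := by positivity
  have hx1 : |1 / q| < 1 := by
    rw [abs_of_pos hx0, div_lt_one hq0]; exact hq
  have h1 := Real.hasSum_pow_div_log_of_abs_lt_one hx1
  have h2 := (hasSum_nat_add_iff' 1).mpr h1
  have h3 := h1.sub (h2.mul_left (c * q))
  have hs : HasSum (fun n : ℕ => (1 / (n + 1 : ℝ) - c / (n + 2)) * (1 / q) ^ (n + 1))
      ((c * q - 1) * Real.log (1 - 1 / q) - Real.log c) := by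
    convert! h3 using 1
    · funext n
      have e : (1 / q) ^ (n + 1 + 1) = (1 / q) ^ (n + 1) * (1 / q) := pow_succ _ _
      have hn1 : (n + 1 : ℝ) ≠ 0 := by positivity
      have hn2 : (n + 2 : ℝ) ≠ 0 := by positivity
      have e2 : ((n + 1 : ℕ) : ℝ) + 1 = n + 2 := by push_cast; ring
      rw [e, e2]
      generalize (1 / q) ^ (n + 1) = y
      field_simp
    · rw [hlog]
      generalize Real.log (1 - 1 / q) = L
      simp
      field_simp
      ring
  refine ⟨hs.tsum_eq.symm, ?_⟩
  have hpos : ∀ n : ℕ, 0 < (1 / (n + 1 : ℝ) - c / (n + 2)) * (1 / q) ^ (n + 1) := by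
    intro n
    refine mul_pos ?_ (by positivity)
    have hn : (0 : ℝ) ≤ n := n.cast_nonneg
    rw [sub_pos, div_lt_div_iff₀ (by positivity) (by positivity)]
    nlinarith
  rw [← hs.tsum_eq]
  exact hs.summable.tsum_pos (fun n => (hpos n).le) 0 (hpos 0)
end

section
/- Let c be the unique real number satisfying e^{-c} = c. Then for every real number q > 1, one has (1 - 1/q)^{cq} > c·(1 - 1/q); equivalently, defining ω(q, F) := q·(1 - 1/q)^F - F·(1 - 1/q), one has ω(q, cq) > 0. -/
/-- Let `c` be the unique real number satisfying `e^{-c} = c`. Then for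
every real `q > 1`, one has `(1 - 1/q)^(c*q) > c*(1 - 1/q)`; equivalently, with
`ω(q, F) := q*(1 - 1/q)^F - F*(1 - 1/q)` one has `ω(q, c*q) > 0`. -/
theorem axelrod_omega_pos_at_cq (c : ℝ) (hc : Real.exp (-c) = c)
    (q : ℝ) (hq : 1 < q) :
    c * (1 - 1 / q) < (1 - 1 / q) ^ (c * q) ∧
    0 < q * (1 - 1 / q) ^ (c * q) - (c * q) * (1 - 1 / q) := by
  have hc0 : 0 < c := hc ▸ Real.exp_pos _
  have hc1 : c < 1 := by
    rw [← hc]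
    exact Real.exp_lt_one_iff.2 (by linarith)
  have hq0 : 0 < q := by linarith
  have hx0 : 0 < 1 - 1 / q := by
    rw [sub_pos, div_lt_one hq0]
    exact hq
  have hx1 : 1 - 1 / q < 1 := by
    have : 0 < 1 / q := by positivity
    linarith
  have hlog : Real.log (1 - 1 / q) < 0 := Real.log_neg hx0 hx1
  have hlow := Real.one_sub_inv_le_log_of_pos hx0
  have hkey : -1 ≤ (q - 1) * Real.log (1 - 1 / q) := by
    have h1 : (q - 1) * (1 - (1 - 1 / q)⁻¹) = -1 := by
      have h2 : 1 - 1 / q = (q - 1) / q := by field_simp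
      have h3 : q - 1 ≠ 0 := (sub_pos.mpr hq).ne'
      rw [h2, inv_div]
      field_simp
      ring
    rw [← h1]
    exact mul_le_mul_of_nonneg_left hlow (by linarith)
  have hmain : c * (1 - 1 / q) < (1 - 1 / q) ^ (c * q) := by
    have h1 : c * (1 - 1 / q) = Real.exp (-c + Real.log (1 - 1 / q)) := by
      rw [Real.exp_add, hc, Real.exp_log hx0]
    rw [h1, Real.rpow_def_of_pos hx0, Real.exp_lt_exp]
    nlinarith [mul_le_mul_of_nonneg_left hkey hc0.le,
      mul_pos (sub_pos.mpr hc1) (neg_pos.mpr hlog)]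
  refine ⟨hmain, ?_⟩
  have := mul_lt_mul_of_pos_left hmain hq0
  linarith
end

section
/- Let c be the unique real number satisfying e^{-c} = c. Then for all real numbers q > 1 and F with F ≤ cq, one has ω(q, F) := q·(1 - 1/q)^F - F·(1 - 1/q) > 0. In particular, for all integers q ≥ 2 and F ≥ 2 with F ≤ cq, the fixation condition ω(q, F) > 0 of Theorem 1 holds. -/
/-- Let `c` be the unique real number satisfying `e^{-c} = c`. Then for
all reals `q > 1` and `F ≤ c*q`, one has `ω(q, F) := q*(1 - 1/q)^F - F*(1 - 1/q) > 0`.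
In particular, for all integers `q ≥ 2` and `F ≥ 2` with `F ≤ c*q`, the fixation
condition `ω(q, F) > 0` of Theorem 1 holds. -/
theorem axelrod_omega_pos_of_le_cq (c : ℝ) (hc : Real.exp (-c) = c) :
    (∀ q F : ℝ, 1 < q → F ≤ c * q →
      0 < q * (1 - 1 / q) ^ F - F * (1 - 1 / q)) ∧
    (∀ q F : ℕ, 2 ≤ q → 2 ≤ F → (F : ℝ) ≤ c * q →
      0 < (q : ℝ) * (1 - 1 / q) ^ (F : ℝ) - F * (1 - 1 / q)) := by
  have hc0 : 0 < c := hc ▸ Real.exp_pos (-c)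
  have hc1 : c < 1 := by
    have h : Real.exp (-c) < 1 := Real.exp_lt_one_iff.2 (by linarith)
    rwa [hc] at h
  have main : ∀ q F : ℝ, 1 < q → F ≤ c * q →
      0 < q * (1 - 1 / q) ^ F - F * (1 - 1 / q) := by
    intro q F hq hF
    have hq0 : 0 < q := by linarith
    have hx1 : 1 / q < 1 := (div_lt_one hq0).2 hq
    have hx0 : 0 < 1 / q := by positivity
    have hinv : (1 - 1 / q)⁻¹ = 1 + 1 / (q - 1) := by
      have h1 : q - 1 ≠ 0 := by linarith
      have h2 : 1 - 1 / q = (q - 1) / q := by field_simp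
      rw [h2, inv_div]
      field_simp
      ring
    obtain ⟨p, hp⟩ : ∃ p, p = 1 - 1 / q := ⟨_, rfl⟩
    rw [← hp] at hinv ⊢
    have hp0 : 0 < p := by linarith
    have hp1 : p < 1 := by linarith
    have hlog : 1 - p⁻¹ ≤ Real.log p := Real.one_sub_inv_le_log_of_pos hp0
    have hlogneg : Real.log p < 0 := Real.log_neg hp0 hp1
    have key : -c < (c * q - 1) * Real.log p := by
      rcases le_total (c * q - 1) 0 with h | h
      · have := mul_nonneg_of_nonpos_of_nonpos h hlogneg.le
        linarith
      · have h1 := mul_le_mul_of_nonneg_left hlog h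
        have h2 : (c * q - 1) / (q - 1) < c := by
          rw [div_lt_iff₀ (by linarith)]
          nlinarith
        have h3 : (c * q - 1) * (1 - p⁻¹) = -((c * q - 1) / (q - 1)) := by
          rw [hinv]; ring
        linarith
    have hpow : c * p < p ^ (c * q) := by
      have h1 : c * p = Real.exp (-c + Real.log p) := by
        rw [Real.exp_add, hc, Real.exp_log hp0]
      rw [h1, Real.rpow_def_of_pos hp0, Real.exp_lt_exp]
      linarith
    have hmono : p ^ (c * q) ≤ p ^ F := Real.rpow_le_rpow_of_exponent_ge hp0 hp1.le hF
    have h1 : q * (c * p) < q * p ^ F := mul_lt_mul_of_pos_left (hpow.trans_le hmono) hq0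
    have h2 : F * p ≤ c * q * p := mul_le_mul_of_nonneg_right hF hp0.le
    linarith
  refine ⟨main, fun q F hq _ hF => main q F ?_ hF⟩
  have : (2 : ℝ) ≤ q := by exact_mod_cast hq
  linarith
end

section
/- Let q ≥ 3 be an integer and set ν_0 := ((2/q)(1 - 1/q))^2, ν_1 := (2/q)(1 - 1/q)·(1 - (2/q)(1 - 1/q)), and ν_2 := (1 - 1/q)^2. Then for every real constant C > 0 there exists ε > 0 such that (11/12)·ν_0 + ν_1 + ν_2 + C·ε ≤ (q - 1 - ε)·(ν_2 - ε). -/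
/-- Let `q ≥ 3` be an integer and set `ν₀ := ((2/q)(1 - 1/q))²`,
`ν₁ := (2/q)(1 - 1/q)(1 - (2/q)(1 - 1/q))` and `ν₂ := (1 - 1/q)²`. Then for every
real `C > 0` there exists `ε > 0` such that
`(11/12) ν₀ + ν₁ + ν₂ + C ε ≤ (q - 1 - ε)(ν₂ - ε)`. -/
theorem axelrod_key_inequality_two_features (q : ℕ) (hq : 3 ≤ q) :
    ∀ C : ℝ, 0 < C → ∃ ε : ℝ, 0 < ε ∧
      (11 / 12) * ((2 / (q : ℝ)) * (1 - 1 / q)) ^ 2 +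
          (2 / (q : ℝ)) * (1 - 1 / q) * (1 - (2 / q) * (1 - 1 / q)) +
          (1 - 1 / (q : ℝ)) ^ 2 + C * ε ≤
        ((q : ℝ) - 1 - ε) * ((1 - 1 / q) ^ 2 - ε) := by
  intro C hC
  have hq3 : (3 : ℝ) ≤ q := by exact_mod_cast hq
  have hq0 : (0 : ℝ) < q := by linarith
  obtain ⟨a, ha⟩ : ∃ a : ℝ, a = 1 / (q : ℝ) := ⟨_, rfl⟩
  have haq : a * q = 1 := by rw [ha]; field_simp
  have ha0 : 0 < a := by rw [ha]; positivity
  have h2 : 2 / (q : ℝ) = 2 * a := by rw [ha]; ring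
  rw [h2, ← ha]
  have ha1 : 0 < 1 - a := by nlinarith
  have hD : 0 < (1 - a) * (q - 3) + a ^ 2 * (1 - a) ^ 2 / 3 := by
    have h1 : 0 ≤ (1 - a) * ((q : ℝ) - 3) := mul_nonneg ha1.le (by linarith)
    have h3 : 0 < a ^ 2 * (1 - a) ^ 2 / 3 := by positivity
    linarith
  have hK : 0 < C + q - 1 + (1 - a) ^ 2 := by
    have := sq_nonneg (1 - a)
    linarith
  refine ⟨_, div_pos hD hK, ?_⟩
  obtain ⟨ε, hε⟩ : ∃ ε : ℝ, ε = ((1 - a) * (q - 3) + a ^ 2 * (1 - a) ^ 2 / 3) /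
    (C + q - 1 + (1 - a) ^ 2) := ⟨_, rfl⟩
  rw [← hε]
  have hm : ε * (C + q - 1 + (1 - a) ^ 2) =
      (1 - a) * (q - 3) + a ^ 2 * (1 - a) ^ 2 / 3 := by
    rw [hε]; exact div_mul_cancel₀ _ hK.ne'
  have key : ((q : ℝ) - 2) * (1 - a) ^ 2 - 2 * a * (1 - a) = (1 - a) * (q - 3) := by
    linear_combination (-(1 - a)) * haq
  nlinarith [sq_nonneg ε]
end
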